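/- Fix integers 2 ≤ r < d. Let Γ ⊂ ℤ³ be a finite set containing no translate of {0,1}³, and let Γ' = {x ∈ ℤ^d : (x₁,x₂,x₃) ∈ Γ, x₄,…,x_{r+1} ∈ {0,1}, x_{r+2} = ⋯ = x_d = 0}. Then the 𝒟_r^d-tilings of Γ' are in bijection with the slab (𝒟_2^3) tilings of Γ; in particular Γ' is 𝒟_r^d-tileable if and only if Γ is slab-tileable, and the numbers of tilings are equal. -/

import Mathlib

/-- A tiling of `Γ` by tiles satisfying `P`: a partition of `Γ` into such tiles. -/
def IsTiling {α : Type*} (P : Set α → Prop) (Γ : Set α) (T : Set (Set α)) : Prop :=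
  (∀ s ∈ T, P s ∧ s.Nonempty) ∧ T.PairwiseDisjoint id ∧ ⋃₀ T = Γ

/-- A copy of the generalized domino `𝒟_r^d`: a translate of the image of the brick
`{0,1}^r × {0}^{d-r}` under a permutation of the `d` coordinates. -/
def IsGenDomino (d r : ℕ) (s : Set (Fin d → ℤ)) : Prop :=
  ∃ (t : Fin d → ℤ) (σ : Equiv.Perm (Fin d)),
    s = (fun v : Fin d → ℤ => t + v ∘ ⇑σ) ''
      {v | ∀ i : Fin d, ((i : ℕ) < r → (v i = 0 ∨ v i = 1)) ∧ (r ≤ (i : ℕ) → v i = 0)}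

/-!
A copy of `𝒟_r^d` is a unit brick with `r` edge directions. Suppose such a brick lies in `Γ'`.
Outside the three coordinates of `Γ` its edges can only run along the `r - 2` thickened
coordinates, and its projection is a brick in `Γ`, which has at most two edge directions because
`Γ` contains no cube. Counting directions, both bounds are attained, so the brick is the thickening
of a slab in `Γ`. Hence thickening every tile is a bijection between the tilings. The same count
works with `ℤ³`, slabs and cubes replaced by `ℤ^ι`, `q`-bricks and `(q + 1)`-bricks.
-/

section PartOver

variable {α β : Type*} {p : β → α} {F : Set β}

/-- The part of `F` lying over `s` along the map `p`. -/
def partOver (p : β → α) (F : Set β) (s : Set α) : Set β := p ⁻¹' s ∩ F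

lemma image_partOver (hp : Set.SurjOn p F Set.univ) (s : Set α) : p '' partOver p F s = s := by
  rw [partOver, Set.image_preimage_inter, Set.univ_subset_iff.1 hp, Set.inter_univ]

lemma partOver_injective (hp : Set.SurjOn p F Set.univ) : Function.Injective (partOver p F) :=
  Function.LeftInverse.injective (g := Set.image p) (image_partOver hp)

lemma partOver_nonempty_iff (hp : Set.SurjOn p F Set.univ) {s : Set α} :
    (partOver p F s).Nonempty ↔ s.Nonempty := by
  rw [← Set.image_nonempty (f := p), image_partOver hp]

lemma disjoint_partOver_iff (hp : Set.SurjOn p F Set.univ) {s t : Set α} :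
    Disjoint (partOver p F s) (partOver p F t) ↔ Disjoint s t := by
  have inter_eq : partOver p F s ∩ partOver p F t = partOver p F (s ∩ t) :=
    (Set.inter_inter_distrib_right _ _ _).symm
  rw [← not_iff_not, Set.not_disjoint_iff_nonempty_inter, Set.not_disjoint_iff_nonempty_inter,
    inter_eq, partOver_nonempty_iff hp]

lemma sUnion_image_partOver (T : Set (Set α)) : ⋃₀ (partOver p F '' T) = partOver p F (⋃₀ T) := by
  rw [Set.sUnion_image, partOver, Set.preimage_sUnion, Set.iUnion₂_inter]
  rfl

variable {P : Set α → Prop} {Q : Set β → Prop} {Γ : Set α}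

lemma isTiling_image_partOver_iff (hp : Set.SurjOn p F Set.univ)
    (hPQ : ∀ D ⊆ partOver p F Γ, Q D ↔ D ∈ partOver p F '' {s | P s}) {T : Set (Set α)} :
    IsTiling Q (partOver p F Γ) (partOver p F '' T) ↔ IsTiling P Γ T := by
  have hinj := partOver_injective hp
  unfold IsTiling
  rw [sUnion_image_partOver, hinj.eq_iff, hinj.injOn.pairwiseDisjoint_image, Set.forall_mem_image]
  simp only [← and_assoc]
  refine and_congr_left fun hΓ => and_congr (forall₂_congr fun s hs => ?_) ?_
  · have hsub : partOver p F s ⊆ partOver p F Γ :=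
      Set.inter_subset_inter_left _ (Set.preimage_mono (hΓ ▸ Set.subset_sUnion_of_mem hs))
    rw [hPQ _ hsub, hinj.mem_set_image, partOver_nonempty_iff hp, Set.mem_ofPred_eq]
  · exact forall₂_congr fun s _ => forall₃_congr fun t _ _ => disjoint_partOver_iff hp

theorem bijOn_image_partOver_isTiling (hp : Set.SurjOn p F Set.univ)
    (hPQ : ∀ D ⊆ partOver p F Γ, Q D ↔ D ∈ partOver p F '' {s | P s}) :
    Set.BijOn (Set.image (partOver p F)) {T | IsTiling P Γ T}
      {T | IsTiling Q (partOver p F Γ) T} := by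
  refine ⟨fun T hT => (isTiling_image_partOver_iff hp hPQ).2 hT,
    (partOver_injective hp).image_injective.injOn, fun T' hT' => ?_⟩
  have subset_range : T' ⊆ Set.range (partOver p F) := fun D hD =>
    have hsub : D ⊆ partOver p F Γ := hT'.2.2 ▸ Set.subset_sUnion_of_mem hD
    Set.image_subset_range _ _ ((hPQ D hsub).1 (hT'.1 D hD).1)
  obtain ⟨T, rfl⟩ := Set.subset_range_iff_exists_image_eq.1 subset_range
  exact ⟨T, (isTiling_image_partOver_iff hp hPQ).1 hT', rfl⟩

end PartOver

section Brick

variable {ι : Type*}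

/-- The unit brick with lowest corner `t` and edge directions `S`: the set of `x` with
`x i ∈ {t i, t i + 1}` for `i ∈ S` and `x i = t i` otherwise, encoded as an order interval. -/
def brick (t : ι → ℤ) (S : Finset ι) : Set (ι → ℤ) := Set.Icc t (t + (S : Set ι).indicator 1)

/-- A set is an `r`-brick if it is a unit brick with exactly `r` edge directions. In `Fin d → ℤ`
with `r ≤ d` these are the copies of `𝒟_r^d`, see `isGenDomino_eq_isBrick`. -/
def IsBrick (r : ℕ) (D : Set (ι → ℤ)) : Prop := ∃ t S, S.card = r ∧ brick t S = D

lemma mem_brick {t x : ι → ℤ} {S : Finset ι} :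
    x ∈ brick t S ↔ ∀ i, x i ∈ Set.Icc (t i) (t i + (S : Set ι).indicator 1 i) :=
  forall_and.symm

lemma left_mem_brick (t : ι → ℤ) (S : Finset ι) : t ∈ brick t S :=
  Set.left_mem_Icc.2 (le_add_of_nonneg_right (Set.indicator_nonneg fun _ _ => zero_le_one))

lemma right_mem_brick (t : ι → ℤ) (S : Finset ι) : t + (S : Set ι).indicator 1 ∈ brick t S :=
  Set.right_mem_Icc.2 (le_add_of_nonneg_right (Set.indicator_nonneg fun _ _ => zero_le_one))

lemma brick_subset_brick (t : ι → ℤ) {A S : Finset ι} (h : A ⊆ S) : brick t A ⊆ brick t S :=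
  Set.Icc_subset_Icc_right (add_le_add_right
    (Set.indicator_le_indicator_of_subset (Finset.coe_subset.2 h) fun _ => zero_le_one) t)

lemma card_le_of_brick_subset {q : ℕ} {Γ : Set (ι → ℤ)} (hΓ : ∀ D ⊆ Γ, ¬ IsBrick (q + 1) D)
    {t : ι → ℤ} {S : Finset ι} (h : brick t S ⊆ Γ) : S.card ≤ q := by
  by_contra! hlt
  obtain ⟨A, hAS, hA⟩ := Finset.exists_subset_card_eq hlt
  exact hΓ _ ((brick_subset_brick t hAS).trans h) ⟨t, A, hA, rfl⟩

lemma IsBrick.exists_forall_add_mem [Fintype ι] {D : Set (ι → ℤ)}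
    (hD : IsBrick (Fintype.card ι) D) :
    ∃ t : ι → ℤ, ∀ v : ι → ℤ, (∀ i, v i = 0 ∨ v i = 1) → t + v ∈ D := by
  obtain ⟨t, S, hS, rfl⟩ := hD
  obtain rfl : S = Finset.univ := Finset.eq_univ_of_card S hS
  refine ⟨t, fun v hv => mem_brick.2 fun i => ?_⟩
  rcases hv i with h | h <;> simp [h]

lemma image_add_comp_brick_zero {κ : Type*} (t : κ → ℤ) (σ : κ ≃ ι) (S : Finset ι) :
    (fun v : ι → ℤ => t + v ∘ σ) '' brick 0 S = brick t (S.map σ.symm.toEmbedding) := by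
  classical
  ext x
  constructor
  · rintro ⟨v, hv, rfl⟩
    refine mem_brick.2 fun j => ?_
    simpa [Set.indicator_apply, -Finset.coe_map, Finset.mem_map_equiv] using mem_brick.1 hv (σ j)
  · intro hx
    refine ⟨(x - t) ∘ σ.symm, mem_brick.2 fun i => ?_, by simp [Function.comp_assoc]⟩
    simpa [Set.indicator_apply, -Finset.coe_map, add_comm] using mem_brick.1 hx (σ.symm i)

end Brick

lemma isGenDomino_eq_isBrick {d r : ℕ} (h : r ≤ d) : IsGenDomino d r = IsBrick r := by
  let R : Finset (Fin d) :=
    (Finset.range r).attachFin fun _ hm => (Finset.mem_range.1 hm).trans_le h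
  have card_R : R.card = r := by rw [Finset.card_attachFin, Finset.card_range]
  have unit_brick : {v : Fin d → ℤ | ∀ i : Fin d, ((i : ℕ) < r → (v i = 0 ∨ v i = 1)) ∧
      (r ≤ (i : ℕ) → v i = 0)} = brick 0 R := by
    ext v
    refine Iff.trans (forall_congr' fun i => ?_) mem_brick.symm
    by_cases hi : (i : ℕ) < r <;> simp [R, hi] <;> omega
  ext D
  simp only [IsGenDomino, unit_brick, image_add_comp_brick_zero]
  constructor
  · rintro ⟨t, σ, rfl⟩
    exact ⟨t, _, by rw [Finset.card_map, card_R], rfl⟩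
  · rintro ⟨t, S, hS, rfl⟩
    obtain ⟨σ, rfl⟩ := Equiv.Perm.exists_map_finset_eq R S (card_R.trans hS.symm)
    exact ⟨t, σ.symm, rfl⟩

section Thicken

variable {ι κ : Type*} {e : ι ↪ κ} {M : Finset κ}

/-- The vectors whose coordinates outside the range of `e` lie in `{0,1}` along `M` and vanish
elsewhere; the coordinates in the range of `e` are free. -/
def brickCylinder (e : ι ↪ κ) (M : Finset κ) : Set (κ → ℤ) :=
  (Set.range e)ᶜ.pi fun j => Set.Icc 0 ((M : Set κ).indicator 1 j)

/-- The thickening of `s ⊆ ℤ^ι` in `ℤ^κ`: `s` is placed in the coordinates given by `e`, and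
multiplied by `{0,1}` along the coordinates in `M` and by `{0}` along the remaining ones. -/
def thicken (e : ι ↪ κ) (M : Finset κ) : Set (ι → ℤ) → Set (κ → ℤ) :=
  partOver (· ∘ e) (brickCylinder e M)

lemma surjOn_comp_brickCylinder : Set.SurjOn (· ∘ e) (brickCylinder e M) Set.univ := by
  intro y _
  refine ⟨Function.extend e y 0, fun j hj => ?_, Function.extend_comp e.injective y 0⟩
  rw [Function.extend_apply' _ _ _ hj]
  exact ⟨le_rfl, Set.indicator_nonneg (fun _ _ => zero_le_one) j⟩

lemma mem_brick_iff_comp {t x : κ → ℤ} {S : Finset κ} :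
    x ∈ brick t S ↔ x ∘ e ∈ brick (t ∘ e) (S.preimage e e.injective.injOn) ∧
      ∀ j ∉ Set.range e, x j ∈ Set.Icc (t j) (t j + (S : Set κ).indicator 1 j) := by
  simp only [mem_brick, Finset.coe_preimage]
  refine ⟨fun h => ⟨fun i => h (e i), fun j _ => h j⟩, fun ⟨h, h'⟩ j => ?_⟩
  by_cases hj : j ∈ Set.range e
  · obtain ⟨i, rfl⟩ := hj
    exact h i
  · exact h' j hj

lemma thicken_brick_comp {t : κ → ℤ} {S : Finset κ} (ht : ∀ j ∉ Set.range e, t j = 0)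
    (hS : ∀ j ∉ Set.range e, j ∈ S ↔ j ∈ M) :
    thicken e M (brick (t ∘ e) (S.preimage e e.injective.injOn)) = brick t S := by
  classical
  ext x
  rw [mem_brick_iff_comp (e := e)]
  refine and_congr_right fun _ => forall₂_congr fun j hj => ?_
  have indicator_eq : (S : Set κ).indicator (1 : κ → ℤ) j = (M : Set κ).indicator 1 j := by
    simp only [Set.indicator_apply, Finset.mem_coe, hS j hj]
  rw [ht j hj, zero_add, indicator_eq]

lemma isBrick_thicken {q : ℕ} (hM : ∀ j ∈ M, j ∉ Set.range e) {s : Set (ι → ℤ)}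
    (hs : IsBrick q s) : IsBrick (q + M.card) (thicken e M s) := by
  classical
  obtain ⟨t, A, rfl, rfl⟩ := hs
  have hdisj : Disjoint (A.map e) M := Finset.disjoint_left.2 fun j hj hjM =>
    hM j hjM (Finset.coe_map_subset_range e A hj)
  have preimage_eq : (A.map e ∪ M).preimage e e.injective.injOn = A := by
    ext i
    have : e i ∉ M := fun h => hM _ h ⟨i, rfl⟩
    rw [Finset.mem_preimage, Finset.mem_union, or_iff_left this, Finset.mem_map']
  refine ⟨Function.extend e t 0, A.map e ∪ M, ?_, ?_⟩
  · rw [Finset.card_union_of_disjoint hdisj, Finset.card_map]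
  · rw [← thicken_brick_comp (e := e) (M := M), Function.extend_comp e.injective, preimage_eq]
    · exact fun j hj => Function.extend_apply' _ _ _ hj
    · intro j hj
      have : j ∉ A.map e := fun h => hj (Finset.coe_map_subset_range e A h)
      rw [Finset.mem_union, or_iff_right this]

section BrickSubset

variable {t : κ → ℤ} {S : Finset κ} {Γ : Set (ι → ℤ)}

lemma brick_comp_subset (h : brick t S ⊆ thicken e M Γ) :
    brick (t ∘ e) (S.preimage e e.injective.injOn) ⊆ Γ := by
  intro y hy
  have comp_eq : Function.extend e y t ∘ e = y := Function.extend_comp e.injective y t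
  have hmem : Function.extend e y t ∈ brick t S := by
    refine (mem_brick_iff_comp (e := e)).2 ⟨by rwa [comp_eq], fun j hj => ?_⟩
    rw [Function.extend_apply' _ _ _ hj]
    exact mem_brick.1 (left_mem_brick t S) j
  exact comp_eq ▸ (h hmem).1

lemma nonneg_and_add_indicator_le_of_brick_subset_thicken (h : brick t S ⊆ thicken e M Γ) {j : κ}
    (hj : j ∉ Set.range e) :
    0 ≤ t j ∧ t j + (S : Set κ).indicator 1 j ≤ (M : Set κ).indicator 1 j :=
  ⟨((h (left_mem_brick t S)).2 j hj).1, ((h (right_mem_brick t S)).2 j hj).2⟩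

lemma mem_of_brick_subset_thicken (h : brick t S ⊆ thicken e M Γ) {j : κ}
    (hj : j ∉ Set.range e) (hjS : j ∈ S) : j ∈ M := by
  classical
  obtain ⟨hlow, hhigh⟩ := nonneg_and_add_indicator_le_of_brick_subset_thicken h hj
  by_contra hjM
  simp only [Set.indicator_apply, Finset.mem_coe, hjS, hjM, if_true, if_false, Pi.one_apply]
    at hhigh
  omega

lemma filter_notMem_range_eq_of_brick_subset_thicken [DecidablePred (· ∈ Set.range e)] {q : ℕ}
    (hΓ : ∀ D ⊆ Γ, ¬ IsBrick (q + 1) D) (h : brick t S ⊆ thicken e M Γ)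
    (hS : S.card = q + M.card) : S.filter (· ∉ Set.range e) = M := by
  have card_inside : (S.filter (· ∈ Set.range e)).card ≤ q := by
    rw [← Finset.card_preimage S e e.injective.injOn]
    exact card_le_of_brick_subset hΓ (brick_comp_subset h)
  have outside_subset : S.filter (· ∉ Set.range e) ⊆ M := fun i hi =>
    mem_of_brick_subset_thicken h (Finset.mem_filter.1 hi).2 (Finset.mem_filter.1 hi).1
  have card_add := S.card_filter_add_card_filter_not (· ∈ Set.range e)
  exact Finset.eq_of_subset_of_card_le outside_subset (by omega)

lemma eq_zero_of_brick_subset_thicken (h : brick t S ⊆ thicken e M Γ) {j : κ}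
    (hj : j ∉ Set.range e) (hjS : j ∈ S ↔ j ∈ M) : t j = 0 := by
  classical
  obtain ⟨hlow, hhigh⟩ := nonneg_and_add_indicator_le_of_brick_subset_thicken h hj
  simp only [Set.indicator_apply, Finset.mem_coe, hjS] at hhigh
  omega

end BrickSubset

theorem isBrick_iff_of_subset_thicken {q : ℕ} {Γ : Set (ι → ℤ)}
    (hM : ∀ j ∈ M, j ∉ Set.range e) (hΓ : ∀ D ⊆ Γ, ¬ IsBrick (q + 1) D) {D : Set (κ → ℤ)}
    (hD : D ⊆ thicken e M Γ) :
    IsBrick (q + M.card) D ↔ D ∈ thicken e M '' {s | IsBrick q s} := by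
  classical
  constructor
  · rintro ⟨t, S, hS, rfl⟩
    have outside_eq := filter_notMem_range_eq_of_brick_subset_thicken hΓ hD hS
    have mem_iff : ∀ j ∉ Set.range e, j ∈ S ↔ j ∈ M := fun j hj => by
      rw [← outside_eq, Finset.mem_filter, and_iff_left hj]
    have thicken_eq := thicken_brick_comp
      (fun j hj => eq_zero_of_brick_subset_thicken hD hj (mem_iff j hj)) mem_iff
    refine ⟨_, ⟨t ∘ e, S.preimage e e.injective.injOn, ?_, rfl⟩, thicken_eq⟩
    have card_add := S.card_filter_add_card_filter_not (· ∈ Set.range e)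
    rw [outside_eq, hS] at card_add
    exact (Finset.card_preimage S e e.injective.injOn).trans (Nat.add_right_cancel card_add)
  · rintro ⟨s, hs, rfl⟩
    exact isBrick_thicken hM hs

end Thicken

section ExtraCoords

variable {k r d : ℕ}

/-- The coordinates `k, …, r` (counted from `0`) of `Fin d`, along which a subset of `ℤ^k` is
thickened. -/
def extraCoords (k : ℕ) (hrd : r < d) : Finset (Fin d) :=
  (Finset.Icc k r).attachFin fun _ hm => (Finset.mem_Icc.1 hm).2.trans_lt hrd

lemma mem_extraCoords {hrd : r < d} {i : Fin d} :
    i ∈ extraCoords k hrd ↔ k ≤ (i : ℕ) ∧ (i : ℕ) ≤ r := by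
  rw [extraCoords, Finset.mem_attachFin, Finset.mem_Icc]

lemma card_extraCoords (hrd : r < d) : (extraCoords k hrd).card = r + 1 - k := by
  rw [extraCoords, Finset.card_attachFin, Nat.card_Icc]

lemma mem_range_castLEEmb {hkd : k ≤ d} {i : Fin d} :
    i ∈ Set.range (Fin.castLEEmb hkd) ↔ (i : ℕ) < k := by
  rw [Fin.coe_castLEEmb, Fin.range_castLE, Set.mem_ofPred_eq]

lemma notMem_range_of_mem_extraCoords {hkd : k ≤ d} {hrd : r < d} {i : Fin d}
    (hi : i ∈ extraCoords k hrd) : i ∉ Set.range (Fin.castLEEmb hkd) := by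
  rw [mem_range_castLEEmb, not_lt]
  exact (mem_extraCoords.1 hi).1

lemma thicken_castLEEmb (hkd : k ≤ d) (hkr : k ≤ r + 1) (hrd : r < d) (s : Set (Fin k → ℤ)) :
    thicken (Fin.castLEEmb hkd) (extraCoords k hrd) s =
      {x | (fun i : Fin k => x (Fin.castLE hkd i)) ∈ s ∧
        ∀ i : Fin d, (k ≤ (i : ℕ) → (i : ℕ) ≤ r → (x i = 0 ∨ x i = 1)) ∧
          (r < (i : ℕ) → x i = 0)} := by
  classical
  ext x
  refine and_congr_right fun _ => forall_congr' fun i => ?_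
  simp only [Set.mem_compl_iff, mem_range_castLEEmb, Set.mem_Icc, Set.indicator_apply,
    Finset.mem_coe, mem_extraCoords, Pi.one_apply]
  split_ifs <;> omega

end ExtraCoords

theorem genDomino_tilings_biject_slab_tilings_general {ι κ : Type*} (e : ι ↪ κ) (M : Finset κ)
    {q : ℕ} {Γ : Set (ι → ℤ)} (hM : ∀ j ∈ M, j ∉ Set.range e)
    (hΓ : ∀ D ⊆ Γ, ¬ IsBrick (q + 1) D) :
    Nonempty ({T // IsTiling (IsBrick (q + M.card)) (thicken e M Γ) T} ≃
      {T // IsTiling (IsBrick q) Γ T}) ∧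
    ((∃ T, IsTiling (IsBrick (q + M.card)) (thicken e M Γ) T) ↔ ∃ T, IsTiling (IsBrick q) Γ T) ∧
    {T | IsTiling (IsBrick (q + M.card)) (thicken e M Γ) T}.ncard =
      {T | IsTiling (IsBrick q) Γ T}.ncard := by
  have bijOn_thicken := bijOn_image_partOver_isTiling (Γ := Γ) surjOn_comp_brickCylinder
    fun _ hD => isBrick_iff_of_subset_thicken hM hΓ hD
  have tileable_iff := nonempty_subtype.symm.trans
    (bijOn_thicken.equiv.symm.nonempty_congr.trans nonempty_subtype)
  exact ⟨⟨bijOn_thicken.equiv.symm⟩, tileable_iff, bijOn_thicken.ncard_eq.symm⟩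

/-- For `2 ≤ r < d`, if `Γ ⊂ ℤ³` is finite and contains no translate of `{0,1}³`,
and `Γ' ⊂ ℤ^d` is obtained from `Γ` by thickening along `r - 2` extra coordinates,
then the `𝒟_r^d`-tilings of `Γ'` are in bijection with the slab (`𝒟_2^3`) tilings
of `Γ`; in particular tileability and the numbers of tilings agree. -/
theorem genDomino_tilings_biject_slab_tilings
    (r d : ℕ) (hr : 2 ≤ r) (hrd : r < d)
    (Γ : Set (Fin 3 → ℤ)) (hΓ : Γ.Finite)
    (hnocube : ¬ ∃ t : Fin 3 → ℤ, ∀ v : Fin 3 → ℤ, (∀ i, v i = 0 ∨ v i = 1) → t + v ∈ Γ) :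
    let Γ' : Set (Fin d → ℤ) :=
      {x | (fun i : Fin 3 => x (Fin.castLE (by omega) i)) ∈ Γ ∧
        ∀ i : Fin d, (3 ≤ (i : ℕ) → (i : ℕ) ≤ r → (x i = 0 ∨ x i = 1)) ∧
          (r < (i : ℕ) → x i = 0)}
    Nonempty ({T // IsTiling (IsGenDomino d r) Γ' T} ≃ {T // IsTiling (IsGenDomino 3 2) Γ T}) ∧
    ((∃ T, IsTiling (IsGenDomino d r) Γ' T) ↔ ∃ T, IsTiling (IsGenDomino 3 2) Γ T) ∧
    {T | IsTiling (IsGenDomino d r) Γ' T}.ncard = {T | IsTiling (IsGenDomino 3 2) Γ T}.ncard := by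
  have hd : 3 ≤ d := by omega
  have card_edges : 2 + (extraCoords 3 hrd).card = r := by
    rw [card_extraCoords]
    omega
  have no_cube : ∀ D ⊆ Γ, ¬ IsBrick (2 + 1) D := fun D hD hcube =>
    have ⟨t, ht⟩ := IsBrick.exists_forall_add_mem hcube
    hnocube ⟨t, fun v hv => hD (ht v hv)⟩
  simpa only [card_edges, thicken_castLEEmb hd (by omega) hrd, isGenDomino_eq_isBrick hrd.le,
    isGenDomino_eq_isBrick (Nat.le_succ 2)] using
    genDomino_tilings_biject_slab_tilings_general (Fin.castLEEmb hd) (extraCoords 3 hrd)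
      (fun _ => notMem_range_of_mem_extraCoords) no_cube
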